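/- arXiv:0911.0098 — 2 statements merged into one kernel-verified Lean document; each statement's English description precedes it below -/
import Mathlib

section
/- Let {E*_i}_{i=0}^d be a system of mutually orthogonal idempotents in End(V), and let A ∈ End(V) satisfy E*_i A E*_j = 0 if |i−j| > 1 and E*_i A E*_j ≠ 0 if |i−j| = 1 (0 ≤ i, j ≤ d). If γ and γ' are antiautomorphisms of End(V) with A^γ = A = A^{γ'} and (E*_0)^γ = E*_0 = (E*_0)^{γ'}, then γ = γ'. Moreover, any such antiautomorphism γ satisfies X^{γγ} = X for all X ∈ End(V). -/
/-! A composite `σ` of two of the antiautomorphisms is multiplicative and fixes `A` and `E*_0`.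
A vector `v` spanning the range of `E*_0` is cyclic for `A`, because `E*_{i+1} A E*_i ≠ 0` lets
one climb from the range of `E*_i` to that of `E*_{i+1}`. Hence, given `X` and a polynomial `B`
in `A`, there is a polynomial `C` in `A` with `X B v = C v`, that is, `X B E*_0 = C E*_0`. As `σ`
fixes `B E*_0` and `C E*_0`, also `σ(X) B v = C v`; so `σ(X)` and `X` agree at all vectors `B v`,
and `σ` is the identity. -/

section CyclicVector

variable {R M : Type*} [CommSemiring R] [AddCommMonoid M] [Module R M]
  {A e : Module.End R M} {v : M}

/-- `v` is a cyclic vector for the endomorphism `A`: it generates the module under the action of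
polynomials in `A`. This is encoded by saying that `v` lies in no proper `A`-invariant
submodule. -/
def IsCyclicVector (A : Module.End R M) (v : M) : Prop :=
  ∀ W ∈ A.invtSubmodule, v ∈ W → W = ⊤

theorem IsCyclicVector.exists_map_mul_eq_self (hv : IsCyclicVector A v)
    (σ : Module.End R M →ₗ[R] Module.End R M) (hσ : ∀ X Y, σ (X * Y) = σ X * σ Y)
    (hσA : σ A = A) (hσe : σ e = e) (w : M) :
    ∃ B, σ (B * e) = B * e ∧ B v = w := by
  let L := LinearMap.eqLocus (σ ∘ₗ LinearMap.mulRight R e) (LinearMap.mulRight R e)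
  have one_mem : 1 ∈ L := by simp [L, hσe]
  have mul_mem : ∀ B ∈ L, A * B ∈ L := fun B (hB : σ (B * e) = B * e) ↦ by
    simp [L, mul_assoc, hσ A, hσA, hB]
  have evaluation_surjective : L.map (LinearMap.applyₗ v) = ⊤ := by
    refine hv _ ?_ ⟨1, one_mem, rfl⟩
    rintro _ ⟨B, hB, rfl⟩
    exact ⟨A * B, mul_mem B hB, rfl⟩
  exact Submodule.eq_top_iff'.mp evaluation_surjective w

theorem IsCyclicVector.map_eq_self (hv : IsCyclicVector A v)
    (he : LinearMap.range e = Submodule.span R {v})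
    (σ : Module.End R M →ₗ[R] Module.End R M) (hσ : ∀ X Y, σ (X * Y) = σ X * σ Y)
    (hσA : σ A = A) (hσe : σ e = e) (X : Module.End R M) : σ X = X := by
  have eq_on_range {Y Z : Module.End R M} : Y * e = Z * e ↔ Y v = Z v := by
    constructor
    · intro h
      obtain ⟨y, rfl⟩ : v ∈ LinearMap.range e := he ▸ Submodule.mem_span_singleton_self v
      exact LinearMap.congr_fun h y
    · intro h
      ext x
      obtain ⟨c, hc⟩ := Submodule.mem_span_singleton.mp (he ▸ LinearMap.mem_range_self e x)
      simp [← hc, h]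
  ext w
  obtain ⟨B, hB, rfl⟩ := hv.exists_map_mul_eq_self σ hσ hσA hσe w
  obtain ⟨C, hC, hCv⟩ := hv.exists_map_mul_eq_self σ hσ hσA hσe (X (B v))
  have hXB : X * B * e = C * e := eq_on_range.mpr hCv.symm
  have hσXB : σ X * B * e = C * e := by
    rw [mul_assoc, ← hB, ← hσ, ← mul_assoc, hXB, hC]
  exact (eq_on_range.mp hσXB).trans hCv

theorem IsCyclicVector.antimultiplicative_comp_apply (hv : IsCyclicVector A v)
    (he : LinearMap.range e = Submodule.span R {v})
    {φ ψ : Module.End R M →ₗ[R] Module.End R M}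
    (hφ : ∀ X Y, φ (X * Y) = φ Y * φ X) (hψ : ∀ X Y, ψ (X * Y) = ψ Y * ψ X)
    (hφA : φ A = A) (hψA : ψ A = A) (hφe : φ e = e) (hψe : ψ e = e) (X : Module.End R M) :
    ψ (φ X) = X :=
  hv.map_eq_self he (ψ ∘ₗ φ) (by simp [hφ, hψ]) (by simp [hφA, hψA]) (by simp [hφe, hψe]) X

end CyclicVector

section Hessenberg

variable {R M : Type*} [CommRing R] [AddCommGroup M] [Module R M] {d : ℕ}
  {E : Fin (d + 1) → Module.End R M} {A : Module.End R M}

theorem range_succ_le_of_mem_invtSubmodule (hsum : ∑ i, E i = 1) {k : Fin d}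
    (hatom : IsAtom (LinearMap.range (E k.succ)))
    (hzero : ∀ i, k.succ < i → E i * A * E k.castSucc = 0)
    (hne : E k.succ * A * E k.castSucc ≠ 0) {W : Submodule R M} (hW : W ∈ A.invtSubmodule)
    (hle : ∀ i ≤ k.castSucc, LinearMap.range (E i) ≤ W) :
    LinearMap.range (E k.succ) ≤ W := by
  obtain ⟨x, hx⟩ : ∃ x, E k.succ (A (E k.castSucc x)) ≠ 0 := by
    contrapose! hne
    exact LinearMap.ext hne
  have hAx : A (E k.castSucc x) ∈ W := hW (hle _ le_rfl ⟨x, rfl⟩)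
  have other_mem : ∀ i ≠ k.succ, E i (A (E k.castSucc x)) ∈ W := by
    intro i hi
    rcases hi.lt_or_gt with hlt | hgt
    · exact hle i (Fin.le_castSucc_iff.mpr hlt) ⟨_, rfl⟩
    · have hEi : E i (A (E k.castSucc x)) = 0 := LinearMap.congr_fun (hzero i hgt) x
      exact hEi ▸ W.zero_mem
  have succ_mem : E k.succ (A (E k.castSucc x)) ∈ W := by
    have hdecomp := LinearMap.congr_fun hsum (A (E k.castSucc x))
    rw [LinearMap.sum_apply, ← Finset.add_sum_erase _ _ (Finset.mem_univ k.succ)] at hdecomp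
    rw [eq_sub_of_add_eq hdecomp]
    exact W.sub_mem hAx (W.sum_mem fun i hi ↦ other_mem i (Finset.ne_of_mem_erase hi))
  refine hatom.not_disjoint_iff_le.mp fun hdisj ↦ hx ?_
  exact Submodule.disjoint_def.mp hdisj _ ⟨_, rfl⟩ succ_mem

theorem isCyclicVector_of_hessenberg (hsum : ∑ i, E i = 1)
    (hatom : ∀ k : Fin d, IsAtom (LinearMap.range (E k.succ)))
    (hzero : ∀ (k : Fin d) (i), k.succ < i → E i * A * E k.castSucc = 0)
    (hne : ∀ k : Fin d, E k.succ * A * E k.castSucc ≠ 0) {v : M}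
    (hv : LinearMap.range (E 0) = Submodule.span R {v}) : IsCyclicVector A v := by
  intro W hW hvW
  have range_le (k : Fin (d + 1)) : ∀ i ≤ k, LinearMap.range (E i) ≤ W := by
    induction k using Fin.induction with
    | zero =>
      intro i hi
      rw [Fin.le_zero_iff.mp hi, hv]
      exact (Submodule.span_singleton_le_iff_mem v W).mpr hvW
    | succ k ih =>
      intro i hi
      rcases hi.lt_or_eq with hlt | rfl
      · exact ih i (Fin.le_castSucc_iff.mpr hlt)
      · exact range_succ_le_of_mem_invtSubmodule hsum (hatom k) (hzero k) (hne k) hW ih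
  refine Submodule.eq_top_iff'.mpr fun x ↦ ?_
  rw [← Module.End.one_apply (R := R) x, ← hsum, LinearMap.sum_apply]
  exact W.sum_mem fun i _ ↦ range_le i i le_rfl ⟨x, rfl⟩

end Hessenberg

theorem sum_eq_one_of_orthogonalIdempotents {K V ι : Type*} [Field K] [AddCommGroup V] [Module K V]
    [FiniteDimensional K V] [Fintype ι] {E : ι → Module.End K V} (hE : OrthogonalIdempotents E)
    (hrank : ∑ i, Module.finrank K (LinearMap.range (E i)) = Module.finrank K V) :
    ∑ i, E i = 1 := by
  classical
  have mul_sum (i : ι) : E i * ∑ j, E j = E i := by simp [Finset.mul_sum, hE.mul_eq]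
  let components : V →ₗ[K] ∀ i, LinearMap.range (E i) := LinearMap.pi fun i ↦ (E i).rangeRestrict
  have components_surjective : Function.Surjective components := by
    intro y
    choose x hx using fun i ↦ (y i).2
    refine ⟨∑ j, E j (x j), funext fun i ↦ Subtype.ext ?_⟩
    have hEE (j : ι) : E i (E j (x j)) = if i = j then E i (x j) else 0 := by
      rw [← Module.End.mul_apply, hE.mul_eq]
      split_ifs with hij
      · rw [hij]
      · rfl
    calc E i (∑ j, E j (x j)) = ∑ j, E i (E j (x j)) := map_sum ..
      _ = E i (x i) := by simp only [hEE, Finset.sum_ite_eq, Finset.mem_univ, if_true]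
      _ = y i := hx i
  have components_injective : Function.Injective components :=
    (LinearMap.injective_iff_surjective_of_finrank_eq_finrank
      (by rw [Module.finrank_pi_fintype, hrank])).mpr components_surjective
  ext x
  refine components_injective (funext fun i ↦ Subtype.ext ?_)
  exact LinearMap.congr_fun (mul_sum i) x

theorem stmt_10_general {K V : Type*} [Field K] [AddCommGroup V] [Module K V] {d : ℕ}
    (hdim : Module.finrank K V = d + 1)
    {E : Fin (d + 1) → Module.End K V} (hE : ∀ i j, E i * E j = if i = j then E i else 0)
    (hrank : ∀ i, Module.finrank K (LinearMap.range (E i)) = 1) {A : Module.End K V}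
    (hzero : ∀ (k : Fin d) (i), k.succ < i → E i * A * E k.castSucc = 0)
    (hne : ∀ k : Fin d, E k.succ * A * E k.castSucc ≠ 0)
    {γ γ' : Module.End K V →ₗ[K] Module.End K V}
    (hγ : ∀ X Y, γ (X * Y) = γ Y * γ X) (hγ' : ∀ X Y, γ' (X * Y) = γ' Y * γ' X)
    (hγA : γ A = A) (hγ'A : γ' A = A) (hγE : γ (E 0) = E 0) (hγ'E : γ' (E 0) = E 0) :
    γ = γ' ∧ ∀ X, γ (γ X) = X := by
  have : FiniteDimensional K V := Module.finite_of_finrank_pos (by omega)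
  have hortho : OrthogonalIdempotents E :=
    ⟨fun i ↦ (hE i i).trans (if_pos rfl), fun i j hij ↦ (hE i j).trans (if_neg hij)⟩
  have hsum : ∑ i, E i = 1 := sum_eq_one_of_orthogonalIdempotents hortho (by simp [hrank, hdim])
  have hatom (i) : IsAtom (LinearMap.range (E i)) :=
    isSimpleModule_iff_isAtom.mp (isSimpleModule_iff_finrank_eq_one.mpr (hrank i))
  obtain ⟨v, hv⟩ := (Submodule.finrank_le_one_iff_isPrincipal _).mp (hrank 0).le
  have hcyclic : IsCyclicVector A v :=
    isCyclicVector_of_hessenberg hsum (fun k ↦ hatom k.succ) hzero hne hv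
  have hγγ : ∀ X, γ (γ X) = X := hcyclic.antimultiplicative_comp_apply hv hγ hγ hγA hγA hγE hγE
  have hγ'γ : ∀ X, γ' (γ X) = X :=
    hcyclic.antimultiplicative_comp_apply hv hγ hγ' hγA hγ'A hγE hγ'E
  refine ⟨LinearMap.ext fun X ↦ ?_, hγγ⟩
  rw [← hγ'γ (γ X), hγγ]

/-- Let `{E*_i}_{i=0}^d` be a system of mutually orthogonal idempotents in `End(V)`, and
let `A ∈ End(V)` satisfy `E*_i A E*_j = 0` if `|i−j| > 1` and `E*_i A E*_j ≠ 0` if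
`|i−j| = 1`. If `γ` and `γ'` are antiautomorphisms of `End(V)` fixing `A` and `E*_0`,
then `γ = γ'`; moreover any such antiautomorphism `γ` satisfies `γ (γ X) = X` for all `X`. -/
theorem stmt_10 {K : Type*} [Field K] {d : ℕ}
    {V : Type*} [AddCommGroup V] [Module K V] [FiniteDimensional K V]
    (hdim : Module.finrank K V = d + 1)
    (Estar : Fin (d + 1) → Module.End K V)
    (hEstar : ∀ i j, Estar i * Estar j = if i = j then Estar i else 0)
    (hEstarRank : ∀ i, Module.finrank K (LinearMap.range (Estar i)) = 1)
    (A : Module.End K V)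
    (htri : ∀ i j : Fin (d + 1), 1 < Nat.dist (i : ℕ) (j : ℕ) → Estar i * A * Estar j = 0)
    (hirr : ∀ i j : Fin (d + 1), Nat.dist (i : ℕ) (j : ℕ) = 1 → Estar i * A * Estar j ≠ 0)
    (γ γ' : Module.End K V ≃ₗ[K] Module.End K V)
    (hγ : ∀ X Y : Module.End K V, γ (X * Y) = γ Y * γ X)
    (hγ' : ∀ X Y : Module.End K V, γ' (X * Y) = γ' Y * γ' X)
    (hγA : γ A = A) (hγ'A : γ' A = A)
    (hγE : γ (Estar 0) = Estar 0) (hγ'E : γ' (Estar 0) = Estar 0) :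
    γ = γ' ∧ ∀ X : Module.End K V, γ (γ X) = X := by
  have hzero (k : Fin d) (i) (hi : k.succ < i) : Estar i * A * Estar k.castSucc = 0 :=
    htri _ _ (by rw [Fin.lt_def, Fin.val_succ] at hi; rw [Nat.dist, Fin.val_castSucc]; omega)
  have hne (k : Fin d) : Estar k.succ * A * Estar k.castSucc ≠ 0 := hirr _ _ (by simp [Nat.dist])
  obtain ⟨hmaps, hinvolutive⟩ := stmt_10_general (γ := γ.toLinearMap) (γ' := γ'.toLinearMap)
    hdim hEstar hEstarRank hzero hne hγ hγ' hγA hγ'A hγE hγ'E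
  exact ⟨LinearEquiv.toLinearMap_injective hmaps, hinvolutive⟩
end

section
/- Adopt the standing assumptions, let Δ be the associated graph, and suppose there exist β, γ*, δ* ∈ K such that θ*_{i−1} − β θ*_i + θ*_{i+1} = γ* for 1 ≤ i ≤ d−1 and θ*_{i−1}² − β θ*_{i−1} θ*_i + θ*_i² − γ*(θ*_{i−1} + θ*_i) = δ* for 1 ≤ i ≤ d. Let i and j be vertices of Δ at path-length distance 3, and suppose there is a unique path of length 3 in Δ connecting i and j; denote this path by (i, r, s, j). Then θ_i − (β+1)θ_r + (β+1)θ_s − θ_j = 0. -/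
/-!
On the block `E*_a · E*_c`, the element `A*²A − βA*AA* + AA*² − γ*(A*A + AA*) − δ*A` is
`E*_a A E*_c` times the scalar `θ*_a² − βθ*_aθ*_c + θ*_c² − γ*(θ*_a + θ*_c) − δ*`. The quadratic
relation kills this scalar whenever `|a − c| = 1`, so the element is block diagonal and commutes
with `A*`. Multiply this commutator on the left by `E_i` and on the right by `E_j`, and expand each
remaining word in `A*` over walks from `i` to `j`. As there is no walk of length one or two, only
the cubic words survive, and all of them are multiples of `P = E_i A* E_r A* E_s A* E_j`: we get
`(θ_i − (β+1)θ_r + (β+1)θ_s − θ_j) P = 0`. Finally `P ≠ 0`, because `E_r` and `E_s` have rank one.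
-/

section LinearMaps

variable {D U V W Z ι : Type*} [DivisionRing D] [AddCommGroup U] [Module D U] [AddCommGroup V]
  [Module D V] [AddCommGroup W] [Module D W] [AddCommGroup Z] [Module D Z]

lemma comp_comp_ne_zero_of_finrank_range_eq_one {f : V →ₗ[D] W} {g : W →ₗ[D] Z}
    {h : U →ₗ[D] V} (hf : Module.finrank D (LinearMap.range f) = 1) (hgf : g ∘ₗ f ≠ 0)
    (hfh : f ∘ₗ h ≠ 0) : g ∘ₗ f ∘ₗ h ≠ 0 := by
  intro hzero
  obtain ⟨u, hu⟩ := DFunLike.ne_iff.mp hfh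
  refine hgf (LinearMap.ext fun v => ?_)
  have hfu : (⟨f (h u), LinearMap.mem_range_self f _⟩ : LinearMap.range f) ≠ 0 := by
    simpa [Subtype.ext_iff] using hu
  obtain ⟨c, hc⟩ := exists_smul_eq_of_finrank_eq_one hf hfu ⟨f v, LinearMap.mem_range_self f v⟩
  have hfv : c • f (h u) = f v := congrArg Subtype.val hc
  have hgu : g (f (h u)) = 0 := LinearMap.congr_fun hzero u
  simp [← hfv, hgu]

variable [Fintype ι] [Nonempty ι] {e : ι → Module.End D V}

lemma exists_basis_of_orthogonalIdempotents [DecidableEq ι] (he : OrthogonalIdempotents e)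
    (hne : ∀ a, e a ≠ 0) (hcard : Module.finrank D V = Fintype.card ι) :
    ∃ b : Module.Basis ι D V, ∀ a c, e a (b c) = if a = c then b c else 0 := by
  choose v hv using fun a => DFunLike.ne_iff.mp (hne a)
  have hev (a c : ι) : e a (e c (v c)) = if a = c then e c (v c) else 0 := by
    rw [← Module.End.mul_apply, he.mul_eq]
    split_ifs with hac
    · rw [hac]
    · rfl
  have hli : LinearIndependent D fun c => e c (v c) := by
    refine Fintype.linearIndependent_iff.mpr fun g hg a => ?_
    have hga : g a • e a (v a) = 0 := by
      simpa [hev] using congrArg (e a) hg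
    exact (smul_eq_zero.mp hga).resolve_right (hv a)
  refine ⟨basisOfLinearIndependentOfCardEqFinrank hli hcard.symm, fun a c => ?_⟩
  simpa using hev a c

lemma completeOrthogonalIdempotents_of_card_eq_finrank (he : OrthogonalIdempotents e)
    (hne : ∀ a, e a ≠ 0) (hcard : Module.finrank D V = Fintype.card ι) :
    CompleteOrthogonalIdempotents e := by
  classical
  obtain ⟨b, hb⟩ := exists_basis_of_orthogonalIdempotents he hne hcard
  exact ⟨he, b.ext fun c => by simp [hb]⟩

lemma finrank_range_eq_one_of_orthogonalIdempotents (he : OrthogonalIdempotents e)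
    (hne : ∀ a, e a ≠ 0) (hcard : Module.finrank D V = Fintype.card ι) (a : ι) :
    Module.finrank D (LinearMap.range (e a)) = 1 := by
  classical
  obtain ⟨b, hb⟩ := exists_basis_of_orthogonalIdempotents he hne hcard
  have hrange : LinearMap.range (e a) = Submodule.span D {b a} := by
    apply le_antisymm
    · rintro _ ⟨v, rfl⟩
      have hv : e a v = b.repr v a • b a := by
        conv_lhs => rw [← b.sum_repr v]
        simp only [map_sum, map_smul, hb, smul_ite, smul_zero, Fintype.sum_ite_eq]
      exact hv ▸ Submodule.smul_mem _ _ (Submodule.mem_span_singleton_self _)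
    · rw [Submodule.span_singleton_le_iff_mem]
      exact ⟨b a, by simp [hb]⟩
  rw [hrange, finrank_span_singleton (b.ne_zero a)]

end LinearMaps

section SumSmulIdempotents

variable {K R ι : Type*} [CommSemiring K] [Semiring R] [Algebra K R] [Fintype ι] {e : ι → R}

lemma mul_sum_smul_of_orthogonalIdempotents (he : OrthogonalIdempotents e) (x : ι → K) (a : ι) :
    e a * ∑ c, x c • e c = x a • e a := by
  classical
  simp [Finset.mul_sum, he.mul_eq]

lemma sum_smul_mul_of_orthogonalIdempotents (he : OrthogonalIdempotents e) (x : ι → K) (a : ι) :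
    (∑ c, x c • e c) * e a = x a • e a := by
  classical
  simp [Finset.sum_mul, he.mul_eq]

lemma commute_sum_smul_of_offDiag_eq_zero (he : CompleteOrthogonalIdempotents e) (x : ι → K)
    {Y : R} (hY : ∀ a c, a ≠ c → e a * Y * e c = 0) : Commute (∑ a, x a • e a) Y := by
  refine Commute.sum_left _ _ _ fun a _ => Commute.smul_left ?_ (x a)
  calc e a * Y = ∑ c, e a * Y * e c := by rw [← Finset.mul_sum, he.complete, mul_one]
    _ = e a * Y * e a := Fintype.sum_eq_single a fun c hc => hY a c hc.symm
    _ = ∑ c, e c * Y * e a := (Fintype.sum_eq_single a fun c hc => hY c a hc).symm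
    _ = Y * e a := by rw [← Finset.sum_mul, ← Finset.sum_mul, he.complete, one_mul]

end SumSmulIdempotents

section TridiagonalRelation

variable {K R ι : Type*} [CommRing K] [Ring R] [Algebra K R]

/-- The element `X²A − βXAX + AX² − γ(XA + AX) − δA`. That it commutes with `X` is Terwilliger's
tridiagonal relation for the pair `X, A`, which is applied here with `X = A*`. -/
def tridiagonalElement (β γ δ : K) (X A : R) : R :=
  X * X * A - β • (X * A * X) + A * X * X - γ • (X * A + A * X) - δ • A

lemma mul_tridiagonalElement_mul {X e f : R} {x y : K} (he : e * X = x • e) (hf : X * f = y • f)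
    (β γ δ : K) (A : R) :
    e * tridiagonalElement β γ δ X A * f =
      (x ^ 2 - β * x * y + y ^ 2 - γ * (x + y) - δ) • (e * A * f) := by
  have he' (M : R) : e * (X * M) = x • (e * M) := by rw [← mul_assoc, he, smul_mul_assoc]
  simp only [tridiagonalElement, sub_mul, add_mul, mul_sub, mul_add, smul_mul_assoc, mul_smul_comm,
    mul_assoc, he', hf]
  module

theorem commute_tridiagonalElement [Fintype ι] {e : ι → R} (he : CompleteOrthogonalIdempotents e)
    {x : ι → K} {X A : R} (hX : X = ∑ a, x a • e a) {β γ δ : K}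
    (hx : ∀ a c, a ≠ c → e a * A * e c ≠ 0 →
      x a ^ 2 - β * x a * x c + x c ^ 2 - γ * (x a + x c) = δ) :
    Commute X (tridiagonalElement β γ δ X A) := by
  subst hX
  refine commute_sum_smul_of_offDiag_eq_zero he x fun a c hac => ?_
  rw [mul_tridiagonalElement_mul (mul_sum_smul_of_orthogonalIdempotents he.1 x a)
    (sum_smul_mul_of_orthogonalIdempotents he.1 x c)]
  by_cases hA : e a * A * e c = 0
  · rw [hA, smul_zero]
  · rw [hx a c hac hA, sub_self, zero_smul]

lemma mul_commutator_tridiagonalElement_mul {A e f : R} {x y : K} (he : e * A = x • e)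
    (hf : A * f = y • f) (β γ δ : K) (X : R) :
    e * (X * tridiagonalElement β γ δ X A - tridiagonalElement β γ δ X A * X) * f =
      (y - x) • (e * X * X * X * f) - (β + 1) • (e * X * X * A * X * f)
        + (β + 1) • (e * X * A * X * X * f) - (γ * (y - x)) • (e * X * X * f)
        - (δ * (y - x)) • (e * X * f) := by
  have he' (M : R) : e * (A * M) = x • (e * M) := by rw [← mul_assoc, he, smul_mul_assoc]
  simp only [tridiagonalElement, sub_mul, add_mul, mul_sub, mul_add, smul_mul_assoc, mul_smul_comm,
    smul_add, mul_assoc, he', hf]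
  module

end TridiagonalRelation

lemma quadratic_relation_of_tridiagonal {K R : Type*} [CommRing K] [Mul R] [Zero R] {d : ℕ}
    {e : Fin (d + 1) → R} {A : R}
    (htri : ∀ a c : Fin (d + 1), 1 < Nat.dist (a : ℕ) (c : ℕ) → e a * A * e c = 0)
    {x : Fin (d + 1) → K} {β γ δ : K}
    (hx : ∀ k : Fin d, x k.castSucc ^ 2 - β * x k.castSucc * x k.succ + x k.succ ^ 2 -
      γ * (x k.castSucc + x k.succ) = δ)
    (a c : Fin (d + 1)) (hac : a ≠ c) (hne : e a * A * e c ≠ 0) :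
    x a ^ 2 - β * x a * x c + x c ^ 2 - γ * (x a + x c) = δ := by
  have hle : Nat.dist (a : ℕ) (c : ℕ) ≤ 1 := not_lt.mp (mt (htri a c) hne)
  obtain hlt | hlt := lt_or_gt_of_ne hac
  · obtain ⟨k, rfl, rfl⟩ : ∃ k : Fin d, k.castSucc = a ∧ k.succ = c := by
      unfold Nat.dist at hle
      exact ⟨⟨a, by omega⟩, rfl, Fin.ext (by simp only [Fin.val_succ]; omega)⟩
    exact hx k
  · obtain ⟨k, rfl, rfl⟩ : ∃ k : Fin d, k.castSucc = c ∧ k.succ = a := by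
      unfold Nat.dist at hle
      exact ⟨⟨c, by omega⟩, rfl, Fin.ext (by simp only [Fin.val_succ]; omega)⟩
    linear_combination hx k

section Walks

variable {R κ : Type*} [Semiring R]

/-- The adjacency relation of the graph `Δ` of `X` with respect to a family `e` of idempotents. It
is a bare relation, and not a `SimpleGraph`, since for a general family it need not be symmetric. -/
def BlockAdj (e : κ → R) (X : R) (a c : κ) : Prop :=
  a ≠ c ∧ e a * X * e c ≠ 0

variable {e : κ → R} {X : R} {i j r s : κ}

lemma block_eq_zero_of_not_blockAdj (hij : i ≠ j) (h : ¬BlockAdj e X i j) :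
    e i * X * e j = 0 :=
  not_ne_iff.mp fun hne => h ⟨hij, hne⟩

lemma block_mul_block_eq_zero_of_no_walk (hij : i ≠ j) (hnot1 : ¬BlockAdj e X i j)
    (hnot2 : ∀ t, ¬(BlockAdj e X i t ∧ BlockAdj e X t j)) (t : κ) :
    e i * X * e t * X * e j = 0 := by
  have hone := block_eq_zero_of_not_blockAdj hij hnot1
  obtain rfl | hit := eq_or_ne i t
  · rw [mul_assoc (e i * X), mul_assoc (e i * X), hone, mul_zero]
  obtain rfl | htj := eq_or_ne t j
  · rw [hone, zero_mul, zero_mul]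
  by_cases hadj : BlockAdj e X i t
  · have htj0 := block_eq_zero_of_not_blockAdj htj fun h => hnot2 t ⟨hadj, h⟩
    rw [mul_assoc (e i * X), mul_assoc (e i * X), htj0, mul_zero]
  · rw [block_eq_zero_of_not_blockAdj hit hadj, zero_mul, zero_mul]

lemma block_mul_block_mul_block_eq_zero_of_unique_walk (hij : i ≠ j) (hnot1 : ¬BlockAdj e X i j)
    (hnot2 : ∀ t, ¬(BlockAdj e X i t ∧ BlockAdj e X t j))
    (huniq : ∀ r' s', BlockAdj e X i r' → BlockAdj e X r' s' → BlockAdj e X s' j →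
      r' = r ∧ s' = s) {t u : κ} (htu : ¬(t = r ∧ u = s)) :
    e i * X * e t * X * e u * X * e j = 0 := by
  have htwo := block_mul_block_eq_zero_of_no_walk hij hnot1 hnot2
  by_contra hne
  have hit : BlockAdj e X i t := by
    refine ⟨?_, fun h => hne (by simp only [h, zero_mul])⟩
    rintro rfl
    have hsplit : e i * X * e i * X * e u * X * e j = e i * X * (e i * X * e u * X * e j) := by
      simp only [mul_assoc]
    exact hne (by rw [hsplit, htwo, mul_zero])
  have huj : BlockAdj e X u j := by
    refine ⟨?_, fun h => hne (by rw [mul_assoc, mul_assoc, ← mul_assoc (e u), h, mul_zero])⟩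
    rintro rfl
    exact hne (by rw [htwo, zero_mul, zero_mul])
  have htu' : BlockAdj e X t u := by
    refine ⟨?_, fun h => ?_⟩
    · rintro rfl
      exact hnot2 t ⟨hit, huj⟩
    · have hsplit : e i * X * e t * X * e u * X * e j = e i * X * (e t * X * e u) * X * e j := by
        simp only [mul_assoc]
      exact hne (by rw [hsplit, h, mul_zero, zero_mul, zero_mul])
  exact htu (huniq t u hit htu' huj)

lemma mul_sum_smul_mul_sum_smul_mul_of_unique_walk {K : Type*} [CommSemiring K] [Algebra K R]
    [Fintype κ] (hij : i ≠ j) (hnot1 : ¬BlockAdj e X i j)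
    (hnot2 : ∀ t, ¬(BlockAdj e X i t ∧ BlockAdj e X t j))
    (huniq : ∀ r' s', BlockAdj e X i r' → BlockAdj e X r' s' → BlockAdj e X s' j →
      r' = r ∧ s' = s) (f g : κ → K) :
    e i * X * (∑ t, f t • e t) * X * (∑ u, g u • e u) * X * e j =
      (f r * g s) • (e i * X * e r * X * e s * X * e j) := by
  have hword {t u : κ} (htu : ¬(t = r ∧ u = s)) : e i * X * e t * X * e u * X * e j = 0 :=
    block_mul_block_mul_block_eq_zero_of_unique_walk hij hnot1 hnot2 huniq htu
  calc e i * X * (∑ t, f t • e t) * X * (∑ u, g u • e u) * X * e j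
      = ∑ t, ∑ u, (f t * g u) • (e i * X * e t * X * e u * X * e j) := by
        simp only [Finset.mul_sum, Finset.sum_mul, mul_smul_comm, smul_mul_assoc,
          Finset.smul_sum, smul_smul, mul_comm (f _)]
        exact Finset.sum_comm
    _ = ∑ u, (f r * g u) • (e i * X * e r * X * e u * X * e j) :=
        Fintype.sum_eq_single r fun t ht => Finset.sum_eq_zero fun u _ => by
          rw [hword fun h => ht h.1, smul_zero]
    _ = (f r * g s) • (e i * X * e r * X * e s * X * e j) :=
        Fintype.sum_eq_single s fun u hu => by rw [hword fun h => hu h.2, smul_zero]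

end Walks

section UniqueShortestPath

variable {K R κ : Type*} [CommRing K] [Ring R] [Algebra K R] [Fintype κ] {e : κ → R} {A X : R}
  {θ : κ → K} {β γ δ : K} {i j r s : κ}

theorem smul_path_eq_zero_of_commute_tridiagonalElement (he : CompleteOrthogonalIdempotents e)
    (hA : A = ∑ a, θ a • e a) (hcomm : Commute X (tridiagonalElement β γ δ X A)) (hij : i ≠ j)
    (hnot1 : ¬BlockAdj e X i j) (hnot2 : ∀ t, ¬(BlockAdj e X i t ∧ BlockAdj e X t j))
    (huniq : ∀ r' s', BlockAdj e X i r' → BlockAdj e X r' s' → BlockAdj e X s' j →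
      r' = r ∧ s' = s) :
    (θ i - (β + 1) * θ r + (β + 1) * θ s - θ j) • (e i * X * e r * X * e s * X * e j) = 0 := by
  set P := e i * X * e r * X * e s * X * e j
  have hword (f g : κ → K) :
      e i * X * (∑ t, f t • e t) * X * (∑ u, g u • e u) * X * e j = (f r * g s) • P :=
    mul_sum_smul_mul_sum_smul_mul_of_unique_walk hij hnot1 hnot2 huniq f g
  have hX1 : e i * X * e j = 0 := block_eq_zero_of_not_blockAdj hij hnot1
  have hX2 : e i * X * X * e j = 0 := by
    calc e i * X * X * e j = ∑ t, e i * X * e t * X * e j := by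
          simp only [← Finset.mul_sum, ← Finset.sum_mul, he.complete, mul_one]
      _ = 0 := Finset.sum_eq_zero fun t _ => block_mul_block_eq_zero_of_no_walk hij hnot1 hnot2 t
  have hX3 : e i * X * X * X * e j = P := by
    simpa only [one_smul, he.complete, mul_one] using hword (fun _ => 1) fun _ => 1
  have hXXAX : e i * X * X * A * X * e j = θ s • P := by
    simpa only [one_smul, he.complete, ← hA, mul_one, one_mul] using hword (fun _ => 1) θ
  have hXAXX : e i * X * A * X * X * e j = θ r • P := by
    simpa only [one_smul, he.complete, ← hA, mul_one] using hword θ fun _ => 1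
  have hexpand := mul_commutator_tridiagonalElement_mul
    (hA ▸ mul_sum_smul_of_orthogonalIdempotents he.1 θ i)
    (hA ▸ sum_smul_mul_of_orthogonalIdempotents he.1 θ j) β γ δ X
  rw [hcomm.eq, sub_self, mul_zero, zero_mul, hX1, hX2, hX3, hXXAX, hXAXX] at hexpand
  linear_combination (norm := module) hexpand

end UniqueShortestPath

theorem stmt_18_general {K V ι κ : Type*} [Field K] [AddCommGroup V] [Module K V] [Fintype ι]
    [Fintype κ] {Estar : ι → Module.End K V} (hEstar : CompleteOrthogonalIdempotents Estar)
    {E : κ → Module.End K V} (hE : CompleteOrthogonalIdempotents E)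
    {A Astar : Module.End K V} {θ : κ → K} (hA : A = ∑ a, θ a • E a)
    {θstar : ι → K} (hAstar : Astar = ∑ a, θstar a • Estar a) {β γstar δstar : K}
    (hrel : ∀ a c, a ≠ c → Estar a * A * Estar c ≠ 0 →
      θstar a ^ 2 - β * θstar a * θstar c + θstar c ^ 2 - γstar * (θstar a + θstar c) = δstar)
    {i j r s : κ} (hEr : Module.finrank K (LinearMap.range (E r)) = 1)
    (hEs : Module.finrank K (LinearMap.range (E s)) = 1) (hij : i ≠ j)
    (hnot1 : ¬BlockAdj E Astar i j)
    (hnot2 : ∀ t, ¬(BlockAdj E Astar i t ∧ BlockAdj E Astar t j))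
    (hir : BlockAdj E Astar i r) (hrs : BlockAdj E Astar r s) (hsj : BlockAdj E Astar s j)
    (huniq : ∀ r' s', BlockAdj E Astar i r' → BlockAdj E Astar r' s' → BlockAdj E Astar s' j →
      r' = r ∧ s' = s) :
    θ i - (β + 1) * θ r + (β + 1) * θ s - θ j = 0 := by
  have hsmul := smul_path_eq_zero_of_commute_tridiagonalElement hE hA
    (commute_tridiagonalElement hEstar hAstar hrel) hij hnot1 hnot2 huniq
  have hrj : (E r * Astar) * (E s * (Astar * E j)) ≠ 0 :=
    comp_comp_ne_zero_of_finrank_range_eq_one hEs hrs.2 hsj.2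
  have hpath : (E i * Astar) * (E r * (Astar * (E s * (Astar * E j)))) ≠ 0 :=
    comp_comp_ne_zero_of_finrank_range_eq_one hEr hir.2 hrj
  simp only [mul_assoc] at hsmul hpath
  exact (smul_eq_zero.mp hsmul).resolve_right hpath

/-- With the standing assumptions, suppose `θ*_{i−1} − β θ*_i + θ*_{i+1} = γ*` for
`1 ≤ i ≤ d−1` and `θ*_{i−1}² − β θ*_{i−1} θ*_i + θ*_i² − γ*(θ*_{i−1} + θ*_i) = δ*` for
`1 ≤ i ≤ d`. Let `i, j` be vertices of `Δ` at path-length distance `3` joined by a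
unique path `(i, r, s, j)` of length `3`. Then
`θ_i − (β+1) θ_r + (β+1) θ_s − θ_j = 0`.
(Adjacency of distinct `a, b` in `Δ` means `E_a A* E_b ≠ 0`; "distance 3" is encoded
by: `i ≠ j`, `i, j` not adjacent, no common neighbour, and the path `(i,r,s,j)`.) -/
theorem stmt_18 {K : Type*} [Field K] {d : ℕ} (hd : 1 ≤ d)
    {V : Type*} [AddCommGroup V] [Module K V] [FiniteDimensional K V]
    (hdim : Module.finrank K V = d + 1)
    (Estar : Fin (d + 1) → Module.End K V)
    (hEstar : ∀ i j, Estar i * Estar j = if i = j then Estar i else 0)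
    (hEstarRank : ∀ i, Module.finrank K (LinearMap.range (Estar i)) = 1)
    (A : Module.End K V)
    (htri : ∀ i j : Fin (d + 1), 1 < Nat.dist (i : ℕ) (j : ℕ) → Estar i * A * Estar j = 0)
    (hirr : ∀ i j : Fin (d + 1), Nat.dist (i : ℕ) (j : ℕ) = 1 → Estar i * A * Estar j ≠ 0)
    (θ : Fin (d + 1) → K) (hθ : Function.Injective θ)
    (E : Fin (d + 1) → Module.End K V)
    (hE : ∀ i j, E i * E j = if i = j then E i else 0)
    (hEne : ∀ i, E i ≠ 0)
    (hEsum : ∑ i, E i = 1)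
    (hA : A = ∑ i, θ i • E i)
    (θstar : Fin (d + 1) → K)
    (Astar : Module.End K V) (hAstar : Astar = ∑ i, θstar i • Estar i)
    (β γstar δstar : K)
    (hrec : ∀ i : ℕ, ∀ _h1 : 1 ≤ i, ∀ _h2 : i ≤ d - 1,
      θstar ⟨i - 1, by omega⟩ - β * θstar ⟨i, by omega⟩ + θstar ⟨i + 1, by omega⟩ = γstar)
    (hrec2 : ∀ i : ℕ, ∀ _h1 : 1 ≤ i, ∀ _h2 : i ≤ d,
      θstar ⟨i - 1, by omega⟩ ^ 2 - β * θstar ⟨i - 1, by omega⟩ * θstar ⟨i, by omega⟩ +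
          θstar ⟨i, by omega⟩ ^ 2 -
          γstar * (θstar ⟨i - 1, by omega⟩ + θstar ⟨i, by omega⟩) = δstar)
    -- the adjacency relation of the graph `Δ`
    (Adj : Fin (d + 1) → Fin (d + 1) → Prop)
    (hAdj : ∀ a b, Adj a b ↔ a ≠ b ∧ E a * Astar * E b ≠ 0)
    -- vertices `i, j` at distance `3`, joined by the path `(i, r, s, j)`
    (i j r s : Fin (d + 1))
    (hij : i ≠ j) (hnot1 : ¬ Adj i j) (hnot2 : ∀ t, ¬(Adj i t ∧ Adj t j))
    (hir : Adj i r) (hrs : Adj r s) (hsj : Adj s j)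
    -- `(i, r, s, j)` is the unique path of length `3` connecting `i` and `j`
    (huniq : ∀ r' s' : Fin (d + 1), Adj i r' → Adj r' s' → Adj s' j → r' = r ∧ s' = s) :
    θ i - (β + 1) * θ r + (β + 1) * θ s - θ j = 0 := by
  have hcard : Module.finrank K V = Fintype.card (Fin (d + 1)) := by rw [hdim, Fintype.card_fin]
  have hEortho := OrthogonalIdempotents.iff_mul_eq.mpr hE
  have hErank := finrank_range_eq_one_of_orthogonalIdempotents hEortho hEne hcard
  have hEstarNe (a : Fin (d + 1)) : Estar a ≠ 0 := fun h => by
    have hrank := hEstarRank a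
    rw [h, LinearMap.range_zero, finrank_bot] at hrank
    exact zero_ne_one hrank
  have hEstarCompl := completeOrthogonalIdempotents_of_card_eq_finrank
    (OrthogonalIdempotents.iff_mul_eq.mpr hEstar) hEstarNe hcard
  have hrel := quadratic_relation_of_tridiagonal htri fun k => hrec2 (k + 1) (by omega) (by omega)
  obtain rfl : Adj = BlockAdj E Astar := funext₂ fun a c => propext (hAdj a c)
  exact stmt_18_general hEstarCompl ⟨hEortho, hEsum⟩ hA hAstar hrel (hErank r) (hErank s)
    hij hnot1 hnot2 hir hrs hsj huniq
end
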